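/- For generic β ∈ ℂ, the quantities W_β and w satisfy the nonlinear shift relation W_β·(w̃ − ŵ) = χ_{β,−δ}(ξ+δ)·W̃_β − χ_{β,−ε}(ξ+ε)·Ŵ_β, where W̃_β denotes W_β evaluated at (n+1,m,h) and Ŵ_β at (n,m+1,h), and similarly for w. -/

import Mathlib

open scoped BigOperators

noncomputable section

/-- A period lattice in `ℂ` spanned by two `ℝ`-independent periods. -/
structure EllLattice where
  ω₁ : ℂ
  ω₂ : ℂ
  indep : ∀ a b : ℝ, a • ω₁ + b • ω₂ = 0 → a = 0 ∧ b = 0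

namespace EllLattice

/-- Membership in the lattice `Λ = ℤω₁ + ℤω₂`. -/
def mem (L : EllLattice) (z : ℂ) : Prop := ∃ m n : ℤ, z = m • L.ω₁ + n • L.ω₂

/-- The lattice point with integer coordinates `p = (m, n)`. -/
def per (L : EllLattice) (p : ℤ × ℤ) : ℂ := p.1 • L.ω₁ + p.2 • L.ω₂

/-- The Weierstrass sigma function associated to the lattice, defined by its
Hadamard product over the nonzero lattice points. -/
def sigma (L : EllLattice) (z : ℂ) : ℂ :=
  z * ∏' p : {p : ℤ × ℤ // p ≠ 0},
      ((1 - z / L.per p.1) *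
        Complex.exp (z / L.per p.1 + z ^ 2 / (2 * (L.per p.1) ^ 2)))

/-- The Weierstrass zeta function `ζ = σ′/σ`. -/
def zeta (L : EllLattice) (z : ℂ) : ℂ := deriv L.sigma z / L.sigma z

/-- The Weierstrass `℘`-function `℘ = −ζ′`. -/
def wp (L : EllLattice) (z : ℂ) : ℂ := - deriv L.zeta z

/-- `Φ_ξ(κ) = σ(ξ+κ)/(σ(ξ)σ(κ))`. -/
def Phi (L : EllLattice) (ξ κ : ℂ) : ℂ := L.sigma (ξ + κ) / (L.sigma ξ * L.sigma κ)

/-- The Lamé function `Ψ_ξ(κ) = Φ_ξ(κ)·e^{−ζ(ξ)κ}`. -/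
def Psi (L : EllLattice) (ξ κ : ℂ) : ℂ := L.Phi ξ κ * Complex.exp (-(L.zeta ξ) * κ)

/-- `η_δ(ξ) = ζ(ξ+δ) − ζ(ξ) − ζ(δ)`. -/
def eta (L : EllLattice) (δ ξ : ℂ) : ℂ := L.zeta (ξ + δ) - L.zeta ξ - L.zeta δ

/-- `χ_{α,β}(ξ) = ζ(α) + ζ(β) + ζ(ξ) − ζ(ξ+α+β)`. -/
def chi (L : EllLattice) (α β ξ : ℂ) : ℂ :=
  L.zeta α + L.zeta β + L.zeta ξ - L.zeta (ξ + α + β)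

end EllLattice

open Matrix

/-- All the data entering the elliptic (N,N′)-soliton solutions of the lattice KP system:
a period lattice, lattice parameters `δ, ε, λ`, a base point `ξ₀`, rapidity parameters
`κ_i, κ′_j`, initial plane-wave constants `ρ⁰_i, ν⁰_j` and a constant `N′×N` matrix `C`. -/
structure KPData (N N' : ℕ) where
  L : EllLattice
  del : ℂ
  eps : ℂ
  lam : ℂ
  xi0 : ℂ
  κ : Fin N → ℂ
  κ' : Fin N' → ℂ
  ρ0 : Fin N → ℂ
  ν0 : Fin N' → ℂ
  C : Matrix (Fin N') (Fin N) ℂ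

namespace KPData

variable {N N' : ℕ}

/-- `ξ = ξ₀ + nδ + mε + hλ`. -/
def xi (D : KPData N N') (n m h : ℤ) : ℂ :=
  D.xi0 + n • D.del + m • D.eps + h • D.lam

/-- The plane-wave factor `ρ_i(n,m,h)`. -/
def ρ (D : KPData N N') (i : Fin N) (n m h : ℤ) : ℂ :=
  (Complex.exp (-(D.L.zeta D.del) * D.κ i) * D.L.Psi D.del (-(D.κ i))) ^ n *
  (Complex.exp (-(D.L.zeta D.eps) * D.κ i) * D.L.Psi D.eps (-(D.κ i))) ^ m *
  (Complex.exp (-(D.L.zeta D.lam) * D.κ i) * D.L.Psi D.lam (-(D.κ i))) ^ h *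
  Complex.exp (D.L.zeta (D.xi n m h) * D.κ i) * D.ρ0 i

/-- The plane-wave factor `ν_j(n,m,h)`. -/
def ν (D : KPData N N') (j : Fin N') (n m h : ℤ) : ℂ :=
  (Complex.exp (D.L.zeta D.del * D.κ' j) * D.L.Psi D.del (D.κ' j)) ^ (-n) *
  (Complex.exp (D.L.zeta D.eps * D.κ' j) * D.L.Psi D.eps (D.κ' j)) ^ (-m) *
  (Complex.exp (D.L.zeta D.lam * D.κ' j) * D.L.Psi D.lam (D.κ' j)) ^ (-h) *
  Complex.exp (D.L.zeta (D.xi n m h) * D.κ' j) * D.ν0 j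

/-- The dressed elliptic Cauchy matrix `M_{ij} = ρ_i Ψ_ξ(κ_i + κ′_j) ν_j`. -/
def M (D : KPData N N') (n m h : ℤ) : Matrix (Fin N) (Fin N') ℂ :=
  Matrix.of fun i j => D.ρ i n m h * D.L.Psi (D.xi n m h) (D.κ i + D.κ' j) * D.ν j n m h

/-- The column vector `r = (ρ_i Ψ_ξ(κ_i))_i`. -/
def r (D : KPData N N') (n m h : ℤ) : Fin N → ℂ :=
  fun i => D.ρ i n m h * D.L.Psi (D.xi n m h) (D.κ i)

/-- The column vector `s = (ν_j Ψ_ξ(κ′_j))_j`. -/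
def s (D : KPData N N') (n m h : ℤ) : Fin N' → ℂ :=
  fun j => D.ν j n m h * D.L.Psi (D.xi n m h) (D.κ' j)

/-- The τ-function `τ = det(1 + MC)`. -/
def τ (D : KPData N N') (n m h : ℤ) : ℂ := (1 + D.M n m h * D.C).det

/-- The diagonal matrix `χ_{α,K}(ξ) = diag(χ_{α,κ_i}(ξ))`. -/
def DK (D : KPData N N') (α : ℂ) (n m h : ℤ) : Matrix (Fin N) (Fin N) ℂ :=
  Matrix.diagonal fun i => D.L.chi α (D.κ i) (D.xi n m h)

/-- The diagonal matrix `χ_{β,K′}(ξ) = diag(χ_{β,κ′_j}(ξ))`. -/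
def DK' (D : KPData N N') (β : ℂ) (n m h : ℤ) : Matrix (Fin N') (Fin N') ℂ :=
  Matrix.diagonal fun j => D.L.chi β (D.κ' j) (D.xi n m h)

/-- `W_β = 1 − sᵀ (χ_{β,K′}(ξ))⁻¹ C (1+MC)⁻¹ r`. -/
def W (D : KPData N N') (β : ℂ) (n m h : ℤ) : ℂ :=
  1 - D.s n m h ⬝ᵥ ((D.DK' β n m h)⁻¹ *ᵥ (D.C *ᵥ ((1 + D.M n m h * D.C)⁻¹ *ᵥ D.r n m h)))

/-- `V_α = 1 − sᵀ (1+CM)⁻¹ C (χ_{α,K}(ξ))⁻¹ r`. -/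
def V (D : KPData N N') (α : ℂ) (n m h : ℤ) : ℂ :=
  1 - D.s n m h ⬝ᵥ ((1 + D.C * D.M n m h)⁻¹ *ᵥ (D.C *ᵥ ((D.DK α n m h)⁻¹ *ᵥ D.r n m h)))

/-- `w₀ = sᵀ C (1+MC)⁻¹ r`. -/
def w0 (D : KPData N N') (n m h : ℤ) : ℂ :=
  D.s n m h ⬝ᵥ (D.C *ᵥ ((1 + D.M n m h * D.C)⁻¹ *ᵥ D.r n m h))

/-- `w = ζ(ξ) − w₀ − nζ(δ) − mζ(ε) − hζ(λ)`. -/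
def w (D : KPData N N') (n m h : ℤ) : ℂ :=
  D.L.zeta (D.xi n m h) - D.w0 n m h - n • D.L.zeta D.del - m • D.L.zeta D.eps -
    h • D.L.zeta D.lam

/-- `S_{β,α} = sᵀ (χ_{β,K′}(ξ))⁻¹ C (1+MC)⁻¹ (χ_{α,K}(ξ))⁻¹ r`. -/
def S (D : KPData N N') (β α : ℂ) (n m h : ℤ) : ℂ :=
  D.s n m h ⬝ᵥ ((D.DK' β n m h)⁻¹ *ᵥ
    (D.C *ᵥ ((1 + D.M n m h * D.C)⁻¹ *ᵥ ((D.DK α n m h)⁻¹ *ᵥ D.r n m h))))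

/-- `u_α = (1+MC)⁻¹ (χ_{α,K}(ξ))⁻¹ r`. -/
def u (D : KPData N N') (α : ℂ) (n m h : ℤ) : Fin N → ℂ :=
  (1 + D.M n m h * D.C)⁻¹ *ᵥ ((D.DK α n m h)⁻¹ *ᵥ D.r n m h)

/-- `u₀ = (1+MC)⁻¹ r`. -/
def u0 (D : KPData N N') (n m h : ℤ) : Fin N → ℂ :=
  (1 + D.M n m h * D.C)⁻¹ *ᵥ D.r n m h

/-- the adjoint (row) vector `ᵗu_β = sᵀ (χ_{β,K′}(ξ))⁻¹ (1+CM)⁻¹`. -/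
def tu (D : KPData N N') (β : ℂ) (n m h : ℤ) : Fin N' → ℂ :=
  (D.s n m h ᵥ* (D.DK' β n m h)⁻¹) ᵥ* (1 + D.C * D.M n m h)⁻¹

/-- the adjoint (row) vector `ᵗu₀ = sᵀ (1+CM)⁻¹`. -/
def tu0 (D : KPData N N') (n m h : ℤ) : Fin N' → ℂ :=
  D.s n m h ᵥ* (1 + D.C * D.M n m h)⁻¹

/-- The gauge variable `𝒱_α = Φ_ξ(α)·V_α`. -/
def calV (D : KPData N N') (α : ℂ) (n m h : ℤ) : ℂ :=
  D.L.Phi (D.xi n m h) α * D.V α n m h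

/-- The gauge variable `𝒲_β = Φ_ξ(β)·W_β`. -/
def calW (D : KPData N N') (β : ℂ) (n m h : ℤ) : ℂ :=
  D.L.Phi (D.xi n m h) β * D.W β n m h

/-- The Schwarzian variable `Z_{β,α} = Φ_ξ(α+β)·(1 − χ_{α,β}(ξ)·S_{β,α})`. -/
def Z (D : KPData N N') (β α : ℂ) (n m h : ℤ) : ℂ :=
  D.L.Phi (D.xi n m h) (α + β) * (1 - D.L.chi α β (D.xi n m h) * D.S β α n m h)

/-- Genericity of the parameters (together with finitely many auxiliary points `extra`):
no nontrivial integer combination of `ξ₀, δ, ε, λ`, the rapidity parameters and the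
auxiliary points lies on the lattice.  In particular all arguments of `σ` occurring in
the soliton solutions and their shifts lie outside `Λ`. -/
def Generic {P : ℕ} (D : KPData N N') (extra : Fin P → ℂ) : Prop :=
  ∀ (c0 cn cm ch : ℤ) (a : Fin N → ℤ) (b : Fin N' → ℤ) (e : Fin P → ℤ),
    ¬ (c0 = 0 ∧ cn = 0 ∧ cm = 0 ∧ ch = 0 ∧ a = 0 ∧ b = 0 ∧ e = 0) →
    ¬ D.L.mem (c0 • D.xi0 + cn • D.del + cm • D.eps + ch • D.lam +
      (∑ i, a i • D.κ i) + (∑ j, b j • D.κ' j) + ∑ t, e t • extra t)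

end KPData

namespace EllLattice

open Filter Topology

/-- The Mathlib period pair. -/
def pp (L : EllLattice) : PeriodPair where
  ω₁ := L.ω₁
  ω₂ := L.ω₂
  indep := by
    rw [LinearIndependent.pair_iff]
    exact L.indep

variable (L : EllLattice)

lemma mem_iff (z : ℂ) : L.mem z ↔ z ∈ L.pp.lattice := by
  rw [PeriodPair.mem_lattice]
  unfold mem
  simp only [zsmul_eq_mul, pp, eq_comm]

lemma per_eq (p : ℤ × ℤ) : L.per p = (L.pp.latticeEquivProd.symm p : ℂ) := by
  rw [PeriodPair.latticeEquiv_symm_apply]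
  simp [per, pp, zsmul_eq_mul]

lemma per_zero : L.per 0 = 0 := by simp [per]

lemma per_mem (p : ℤ × ℤ) : L.mem (L.per p) := ⟨p.1, p.2, rfl⟩

lemma per_ne_zero {p : ℤ × ℤ} (hp : p ≠ 0) : L.per p ≠ 0 := by
  rw [per_eq]
  intro h
  have : L.pp.latticeEquivProd.symm p = 0 := Subtype.ext h
  exact hp (by simpa using this)

lemma mem_zero : L.mem 0 := ⟨0, 0, by simp⟩

lemma mem_neg {z : ℂ} : L.mem (-z) ↔ L.mem z := by
  simp [mem_iff]

lemma mem_add {z w : ℂ} (hz : L.mem z) (hw : L.mem w) : L.mem (z + w) := by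
  rw [mem_iff] at *
  exact add_mem hz hw

lemma mem_add_right {z w : ℂ} (hw : L.mem w) : L.mem (z + w) ↔ L.mem z := by
  simp only [mem_iff] at *
  exact Submodule.add_mem_iff_left _ hw

/-- elementary factor -/
def EF (w : ℂ) : ℂ := (1 - w) * Complex.exp (w + w ^ 2 / 2)

lemma hasDerivAt_EF (w : ℂ) : HasDerivAt EF (-w ^ 2 * Complex.exp (w + w ^ 2 / 2)) w := by
  have h1 : HasDerivAt (fun w : ℂ => 1 - w) (-1) w := by
    simpa using (hasDerivAt_id w).const_sub 1
  have h2 : HasDerivAt (fun w : ℂ => w + w ^ 2 / 2) (1 + w) w := by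
    have := (hasDerivAt_id w).add (((hasDerivAt_id w).pow 2).div_const 2)
    refine this.congr_deriv ?_
    simp
  refine (h1.mul h2.cexp).congr_deriv ?_
  ring

lemma EF_bound {w : ℂ} (hw : ‖w‖ ≤ 1) : ‖EF w - 1‖ ≤ Real.exp 2 * ‖w‖ ^ 3 := by
  have hc := (convex_closedBall (0 : ℂ) ‖w‖).norm_image_sub_le_of_norm_hasDerivWithin_le
    (f := EF) (f' := fun w => -w ^ 2 * Complex.exp (w + w ^ 2 / 2))
    (C := Real.exp 2 * ‖w‖ ^ 2) (x := 0) (y := w)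
    (fun x _ => (hasDerivAt_EF x).hasDerivWithinAt) ?_ (by simp) (by simp)
  · have h0 : EF 0 = 1 := by simp [EF]
    rw [h0, sub_zero] at hc
    refine hc.trans (le_of_eq (by ring))
  · intro x hx
    have hx' : ‖x‖ ≤ ‖w‖ := by simpa using hx
    rw [norm_mul, norm_neg, norm_pow, mul_comm, Complex.norm_exp]
    gcongr
    refine (Complex.re_le_norm _).trans ?_
    refine (norm_add_le _ _).trans ?_
    have : ‖x‖ ≤ 1 := hx'.trans hw
    rw [norm_div, norm_pow]
    simp only [Complex.norm_ofNat]
    nlinarith [norm_nonneg x]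

lemma differentiable_EF : Differentiable ℂ EF := fun w => (hasDerivAt_EF w).differentiableAt

/-- index type -/
abbrev Idx := {p : ℤ × ℤ // p ≠ 0}

/-- product term minus one -/
def tm (p : Idx) (z : ℂ) : ℂ := EF (z / L.per p.1) - 1

/-- the product part of sigma -/
def gP (z : ℂ) : ℂ := ∏' p : Idx, (1 + L.tm p z)

lemma sigma_eq (z : ℂ) : L.sigma z = z * L.gP z := by
  unfold sigma gP
  congr 1
  refine tprod_congr fun p => ?_
  simp only [tm, EF, add_sub_cancel]
  congr 2
  rw [div_pow, mul_comm, ← div_div]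

lemma summable_per : Summable fun p : Idx => ‖L.per p.1‖⁻¹ ^ 3 := by
  have h := ZLattice.summable_norm_pow_inv L.pp.lattice 3 (by simp)
  have h2 := (L.pp.latticeEquivProd.symm.toEquiv.summable_iff).mpr h
  have h3 := h2.subtype {p : ℤ × ℤ | p ≠ 0}
  refine h3.congr fun p => ?_
  simp [per_eq]

lemma differentiable_tm (p : Idx) : Differentiable ℂ (L.tm p) := by
  unfold tm
  exact ((differentiable_EF.comp (differentiable_id.div_const _))).sub_const 1

lemma tm_bound (R : ℝ) : ∀ᶠ p : Idx in cofinite, ∀ z : ℂ, ‖z‖ ≤ R →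
    ‖L.tm p z‖ ≤ Real.exp 2 * R ^ 3 * ‖L.per p.1‖⁻¹ ^ 3 := by
  have h0 := L.summable_per.tendsto_cofinite_zero
  by_cases hR : R ≤ 0
  · refine Eventually.of_forall fun p z hz => ?_
    have hz0 : ‖z‖ = 0 := le_antisymm (hz.trans hR) (norm_nonneg _)
    have hR0 : R = 0 := le_antisymm hR (hz0 ▸ hz)
    have : z = 0 := by simpa using hz0
    subst this
    simp [tm, EF, hR0]
  push Not at hR
  have h1 : ∀ᶠ p : Idx in cofinite, ‖L.per p.1‖⁻¹ ^ 3 < R⁻¹ ^ 3 :=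
    h0.eventually_lt_const (by positivity)
  filter_upwards [h1] with p hp z hz
  have h2 : ‖L.per p.1‖⁻¹ < R⁻¹ := lt_of_pow_lt_pow_left₀ 3 (by positivity) hp
  have h3 : ‖z / L.per p.1‖ ≤ R * ‖L.per p.1‖⁻¹ := by
    rw [norm_div, div_eq_mul_inv]; gcongr
  have h4 : R * ‖L.per p.1‖⁻¹ ≤ 1 := by
    calc R * ‖L.per p.1‖⁻¹ ≤ R * R⁻¹ := by gcongr
      _ = 1 := mul_inv_cancel₀ hR.ne'
  refine (EF_bound (h3.trans h4)).trans ?_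
  rw [mul_assoc, ← mul_pow]
  gcongr

lemma gP_tendsto : TendstoLocallyUniformlyOn (fun (s : Finset Idx) z => ∏ p ∈ s, (1 + L.tm p z))
    L.gP atTop Set.univ := by
  rw [← hasProdLocallyUniformlyOn_iff_tendstoLocallyUniformlyOn]
  apply hasProdLocallyUniformlyOn_of_forall_compact isOpen_univ
  intro K _ hK
  obtain ⟨R, hR⟩ := hK.isBounded.exists_norm_le
  refine Summable.hasProdUniformlyOn_one_add hK
    (L.summable_per.mul_left (Real.exp 2 * R ^ 3)) ?_
    (fun p => (L.differentiable_tm p).continuous.continuousOn)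
  filter_upwards [L.tm_bound R] with p hp x hx using hp x (hR x hx)

lemma differentiable_partial (s : Finset Idx) :
    Differentiable ℂ (fun z => ∏ p ∈ s, (1 + L.tm p z)) := by
  have := fun p => L.differentiable_tm p
  fun_prop

lemma differentiable_gP : Differentiable ℂ L.gP := by
  rw [← differentiableOn_univ]
  exact L.gP_tendsto.differentiableOn
    (Eventually.of_forall fun s => (L.differentiable_partial s).differentiableOn) isOpen_univ

lemma one_add_tm_ne {z : ℂ} (p : Idx) (hz : z ≠ L.per p.1) : 1 + L.tm p z ≠ 0 := by
  simp only [tm, EF, add_sub_cancel]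
  refine mul_ne_zero ?_ (Complex.exp_ne_zero _)
  rw [sub_ne_zero]
  intro h
  exact hz ((div_eq_one_iff_eq (L.per_ne_zero p.2)).mp h.symm)

lemma summable_tm (z : ℂ) : Summable fun p : Idx => ‖L.tm p z‖ := by
  refine (L.summable_per.mul_left (Real.exp 2 * ‖z‖ ^ 3)).of_norm_bounded_eventually ?_
  filter_upwards [L.tm_bound ‖z‖] with p hp
  simpa using hp z le_rfl

lemma gP_ne_zero {z : ℂ} (hz : ∀ p : Idx, z ≠ L.per p.1) : L.gP z ≠ 0 :=
  tprod_one_add_ne_zero_of_summable (fun p => L.one_add_tm_ne p (hz p)) (L.summable_tm z)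

lemma gP_ne_zero' {z : ℂ} (hz : ¬ L.mem z) : L.gP z ≠ 0 :=
  L.gP_ne_zero fun p h => hz (h ▸ L.per_mem p.1)

lemma gP_zero : L.gP 0 = 1 := by
  simp [gP, tm, EF]

lemma sigma_zero : L.sigma 0 = 0 := by simp [sigma_eq]

lemma sigma_ne_zero {z : ℂ} (hz : ¬ L.mem z) : L.sigma z ≠ 0 := by
  rw [sigma_eq]
  refine mul_ne_zero ?_ (L.gP_ne_zero' hz)
  rintro rfl
  exact hz L.mem_zero

lemma differentiable_sigma : Differentiable ℂ L.sigma := by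
  have : L.sigma = fun z => z * L.gP z := funext L.sigma_eq
  rw [this]
  exact differentiable_id.mul L.differentiable_gP

lemma deriv_sigma_zero : deriv L.sigma 0 = 1 := by
  have : L.sigma = fun z => z * L.gP z := funext L.sigma_eq
  rw [this]
  have h := (hasDerivAt_id (0 : ℂ)).mul (L.differentiable_gP 0).hasDerivAt
  refine h.deriv.trans ?_
  simp [gP_zero]

lemma per_neg (p : ℤ × ℤ) : L.per (-p) = - L.per p := by simp [per]; ring

lemma gP_neg (z : ℂ) : L.gP (-z) = L.gP z := by
  unfold gP
  rw [← (Equiv.subtypeEquiv (Equiv.neg (ℤ × ℤ)) (p := fun p => p ≠ 0) (q := fun p => p ≠ 0)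
    (by simp)).tprod_eq]
  refine tprod_congr fun p => ?_
  simp [tm, per_neg]

lemma sigma_neg (z : ℂ) : L.sigma (-z) = - L.sigma z := by
  simp [sigma_eq, gP_neg]

lemma deriv_sigma_neg (z : ℂ) : deriv L.sigma (-z) = deriv L.sigma z := by
  have h : (fun z => L.sigma (-z)) = fun z => - L.sigma z := funext L.sigma_neg
  have h2 := congrFun (congrArg deriv h) z
  rw [deriv_comp_neg, deriv.fun_neg] at h2
  exact neg_injective h2

lemma zeta_neg (z : ℂ) : L.zeta (-z) = - L.zeta z := by
  simp [zeta, sigma_neg, deriv_sigma_neg, div_neg]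

end EllLattice

namespace EllLattice

open Filter Topology

variable (L : EllLattice)

lemma isOpen_compl : IsOpen {z : ℂ | ¬ L.mem z} := by
  have h := L.pp.isClosed_lattice.isOpen_compl
  convert h using 1
  ext z
  simp [mem_iff]

lemma isPreconnected_compl : IsPreconnected {z : ℂ | ¬ L.mem z} := by
  have hc : (Set.range L.per).Countable := Set.countable_range _
  have h := hc.isPathConnected_compl_of_one_lt_rank (E := ℂ) (by simp)
  have h2 : {z : ℂ | ¬ L.mem z} = (Set.range L.per)ᶜ := by
    ext z
    simp only [mem, per, Set.mem_ofPred_eq, Set.mem_compl_iff, Set.mem_range, Prod.exists]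
    simp only [eq_comm]
  rw [h2]
  exact h.isConnected.isPreconnected

lemma deriv_logDeriv {f : ℂ → ℂ} (hf : Differentiable ℂ f) {z : ℂ} (hz : f z ≠ 0) :
    deriv (logDeriv f) z = (deriv (deriv f) z * f z - deriv f z * deriv f z) / f z ^ 2 := by
  have hd : Differentiable ℂ (deriv f) := hf.deriv
  have := ((hd z).hasDerivAt.div (hf z).hasDerivAt hz).deriv
  exact this

lemma hasDerivAt_tm (p : Idx) (z : ℂ) : HasDerivAt (fun z => 1 + L.tm p z)
    (-(z / L.per p.1) ^ 2 * Complex.exp (z / L.per p.1 + (z / L.per p.1) ^ 2 / 2)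
      / L.per p.1) z := by
  have h1 : HasDerivAt (fun z : ℂ => z / L.per p.1) (1 / L.per p.1) z :=
    (hasDerivAt_id z).div_const _
  have h2 := (((hasDerivAt_EF (z / L.per p.1)).comp z h1).sub_const 1).const_add 1
  refine h2.congr_deriv ?_
  ring

lemma logDeriv_tm (p : Idx) {z : ℂ} (hz : z ≠ L.per p.1) :
    logDeriv (fun z => 1 + L.tm p z) z
      = 1 / (z - L.per p.1) + 1 / L.per p.1 + z / L.per p.1 ^ 2 := by
  rw [logDeriv_apply, (L.hasDerivAt_tm p z).deriv]
  have h0 := L.per_ne_zero p.2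
  have h1 : z - L.per p.1 ≠ 0 := sub_ne_zero.mpr hz
  have h2 : 1 - z / L.per p.1 ≠ 0 := by
    rw [sub_ne_zero]
    intro h
    exact hz ((div_eq_one_iff_eq h0).mp h.symm)
  have h3 : L.per p.1 - z ≠ 0 := sub_ne_zero.mpr hz.symm
  simp only [tm, EF, add_sub_cancel]
  rw [mul_comm (1 - _), mul_comm (-_ ^ 2), mul_div_assoc, mul_div_mul_left _ _ (Complex.exp_ne_zero _)]
  have h4 : 1 - z / L.per p.1 = - (z - L.per p.1) / L.per p.1 := by field_simp; ring
  rw [h4]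
  field_simp
  ring

lemma deriv_logDeriv_partial (s : Finset Idx) {z : ℂ} (hz : ¬ L.mem z) :
    deriv (logDeriv (fun z => ∏ p ∈ s, (1 + L.tm p z))) z
      = ∑ p ∈ s, -(1 / (z - L.per p.1) ^ 2 - 1 / L.per p.1 ^ 2) := by
  have h1 : logDeriv (fun z => ∏ p ∈ s, (1 + L.tm p z)) =ᶠ[𝓝 z]
      fun z => ∑ p ∈ s, (1 / (z - L.per p.1) + 1 / L.per p.1 + z / L.per p.1 ^ 2) := by
    filter_upwards [L.isOpen_compl.mem_nhds hz] with x hx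
    have hx' : ∀ p : Idx, x ≠ L.per p.1 := fun p h => hx (h ▸ L.per_mem p.1)
    rw [logDeriv_prod]
    · exact Finset.sum_congr rfl fun p _ => L.logDeriv_tm p (hx' p)
    · exact fun p _ => L.one_add_tm_ne p (hx' p)
    · exact fun p _ => (L.hasDerivAt_tm p x).differentiableAt
  rw [h1.deriv_eq]
  refine HasDerivAt.deriv (HasDerivAt.fun_sum fun p _ => ?_)
  have hx : z - L.per p.1 ≠ 0 := sub_ne_zero.mpr fun h => hz (h ▸ L.per_mem p.1)
  have h2 := (((hasDerivAt_id z).sub_const (L.per p.1)).fun_inv hx).add_const (1 / L.per p.1)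
  have h3 := h2.add ((hasDerivAt_id z).div_const (L.per p.1 ^ 2))
  simp only [one_div]
  simp only [one_div, id] at h3
  refine h3.congr_deriv ?_
  ring

lemma hasSum_deriv_logDeriv {z : ℂ} (hz : ¬ L.mem z) :
    HasSum (fun p : Idx => -(1 / (z - L.per p.1) ^ 2 - 1 / L.per p.1 ^ 2))
      (deriv (logDeriv L.gP) z) := by
  unfold HasSum
  rw [SummationFilter.unconditional_filter]
  simp_rw [← fun s => L.deriv_logDeriv_partial s hz]
  have hF : ∀ s : Finset Idx, (∏ p ∈ s, (1 + L.tm p z)) ≠ 0 := fun s =>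
    Finset.prod_ne_zero_iff.mpr fun p _ =>
      L.one_add_tm_ne p fun h => hz (h ▸ L.per_mem p.1)
  simp_rw [fun s => deriv_logDeriv (L.differentiable_partial s) (hF s)]
  rw [deriv_logDeriv L.differentiable_gP (L.gP_ne_zero' hz)]
  have t0 := L.gP_tendsto
  have t1 := t0.deriv
    (Eventually.of_forall fun s => (L.differentiable_partial s).differentiableOn) isOpen_univ
  have t2 := t1.deriv
    (Eventually.of_forall fun s => (L.differentiable_partial s).deriv.differentiableOn) isOpen_univ
  have u0 := t0.tendsto_at (Set.mem_univ z)
  have u1 := t1.tendsto_at (Set.mem_univ z)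
  have u2 := t2.tendsto_at (Set.mem_univ z)
  exact ((u2.mul u0).sub (u1.mul u1)).div (u0.pow 2) (pow_ne_zero 2 (L.gP_ne_zero' hz))

lemma deriv_zeta {z : ℂ} (hz : ¬ L.mem z) : deriv L.zeta z = - L.pp.weierstrassP z := by
  have h1 : L.zeta =ᶠ[𝓝 z] fun x => x⁻¹ + logDeriv L.gP x := by
    filter_upwards [L.isOpen_compl.mem_nhds hz] with x hx
    have hx0 : x ≠ 0 := by rintro rfl; exact hx L.mem_zero
    have e : L.zeta x = logDeriv (fun z => z * L.gP z) x := by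
      have : L.sigma = fun z => z * L.gP z := funext L.sigma_eq
      rw [logDeriv_apply, ← this, zeta, sigma_eq]
    rw [e, logDeriv_mul x hx0 (L.gP_ne_zero' hx) differentiableAt_fun_id (L.differentiable_gP x)]
    simp
  rw [h1.deriv_eq]
  have hz0 : z ≠ 0 := by rintro rfl; exact hz L.mem_zero
  have hd : DifferentiableAt ℂ (logDeriv L.gP) z :=
    (L.differentiable_gP.deriv z).div (L.differentiable_gP z) (L.gP_ne_zero' hz)
  rw [deriv_fun_add (differentiableAt_inv hz0) hd, deriv_inv]
  rw [← (L.hasSum_deriv_logDeriv hz).tsum_eq]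
  have hs := L.pp.hasSum_weierstrassP z
  have hs2 := (L.pp.latticeEquivProd.symm.toEquiv.hasSum_iff).mpr hs
  have hs3 := (hs2.summable.sum_add_tsum_subtype_compl {0}).trans hs2.tsum_eq
  rw [← hs3, tsum_neg]
  simp only [Finset.sum_singleton, Function.comp]
  rw [neg_add]
  congr 1
  · simp
  · congr 1
    let e : Idx ≃ {x : ℤ × ℤ // x ∉ ({0} : Finset (ℤ × ℤ))} :=
      Equiv.subtypeEquivRight (by simp)
    rw [← e.tsum_eq]
    refine tsum_congr fun p => ?_
    simp [per_eq, e]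

lemma differentiableAt_zeta {z : ℂ} (hz : ¬ L.mem z) : DifferentiableAt ℂ L.zeta z :=
  (L.differentiable_sigma.deriv z).div (L.differentiable_sigma z) (L.sigma_ne_zero hz)

lemma zeta_quasi {ω : ℂ} (hω : L.mem ω) :
    ∃ η : ℂ, ∀ z, ¬ L.mem z → L.zeta (z + ω) = L.zeta z + η := by
  have hd : ∀ z, ¬ L.mem z → HasDerivAt (fun z => L.zeta (z + ω) - L.zeta z) 0 z := by
    intro z hz
    have hz' : ¬ L.mem (z + ω) := by rwa [L.mem_add_right hω]
    have h1 := (L.differentiableAt_zeta hz').hasDerivAt.comp_add_const z ω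
    have h2 := (L.differentiableAt_zeta hz).hasDerivAt
    refine (h1.sub h2).congr_deriv ?_
    rw [L.deriv_zeta hz, L.deriv_zeta hz']
    have := L.pp.weierstrassP_add_coe z ⟨ω, (L.mem_iff ω).mp hω⟩
    simp only at this
    rw [this]; ring
  obtain ⟨η, h⟩ := L.isOpen_compl.exists_is_const_of_deriv_eq_zero L.isPreconnected_compl
    (f := fun z => L.zeta (z + ω) - L.zeta z)
    (fun z hz => (hd z hz).differentiableAt.differentiableWithinAt)
    (fun z hz => (hd z hz).deriv)
  exact ⟨η, fun z hz => by rw [← h z hz]; ring⟩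

lemma dense_compl : Dense {z : ℂ | ¬ L.mem z} := by
  have hc : (Set.range L.per).Countable := Set.countable_range _
  have h := hc.dense_compl ℂ
  refine h.mono ?_
  intro z hz hm
  obtain ⟨a, b, e⟩ := hm
  exact hz ⟨(a, b), e.symm⟩

lemma sigma_quasi {ω : ℂ} (hω : L.mem ω) :
    ∃ A η : ℂ, A ≠ 0 ∧ ∀ z, L.sigma (z + ω) = A * Complex.exp (η * z) * L.sigma z := by
  obtain ⟨η, hη⟩ := L.zeta_quasi hω
  have hd : ∀ z, ¬ L.mem z →
      HasDerivAt (fun z => L.sigma (z + ω) * Complex.exp (-η * z) / L.sigma z) 0 z := by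
    intro z hz
    have hz' : ¬ L.mem (z + ω) := by rwa [L.mem_add_right hω]
    have h1 := (L.differentiable_sigma (z + ω)).hasDerivAt.comp_add_const z ω
    have h2 := (L.differentiable_sigma z).hasDerivAt
    have h3 : HasDerivAt (fun z => Complex.exp (-η * z)) (Complex.exp (-η * z) * -η) z := by
      simpa using ((hasDerivAt_id z).const_mul (-η)).cexp
    refine ((h1.mul h3).div h2 (L.sigma_ne_zero hz)).congr_deriv ?_
    have e := hη z hz
    unfold zeta at e
    have n1 := L.sigma_ne_zero hz
    have n2 := L.sigma_ne_zero hz'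
    rw [div_eq_iff n2] at e
    rw [e]
    simp only [Pi.mul_apply]
    field_simp
    ring
  obtain ⟨A, h⟩ := L.isOpen_compl.exists_is_const_of_deriv_eq_zero L.isPreconnected_compl
    (f := fun z => L.sigma (z + ω) * Complex.exp (-η * z) / L.sigma z)
    (fun z hz => (hd z hz).differentiableAt.differentiableWithinAt)
    (fun z hz => (hd z hz).deriv)
  have key : ∀ z, ¬ L.mem z → L.sigma (z + ω) = A * Complex.exp (η * z) * L.sigma z := by
    intro z hz
    rw [← h z hz]
    have n1 := L.sigma_ne_zero hz
    field_simp
    rw [mul_assoc, ← Complex.exp_add]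
    simp
  refine ⟨A, η, ?_, ?_⟩
  · obtain ⟨z, hz⟩ := L.dense_compl.nonempty
    have hz' : ¬ L.mem (z + ω) := by rwa [L.mem_add_right hω]
    intro hA
    exact L.sigma_ne_zero hz' (by rw [key z hz, hA]; ring)
  · have hs := L.differentiable_sigma.continuous
    have := Continuous.ext_on L.dense_compl (f := fun z => L.sigma (z + ω))
      (g := fun z => A * Complex.exp (η * z) * L.sigma z) (by fun_prop) (by fun_prop) key
    exact fun z => congrFun this z

lemma deriv_sigma_quasi {ω A η : ℂ}
    (h : ∀ z, L.sigma (z + ω) = A * Complex.exp (η * z) * L.sigma z) (z : ℂ) :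
    deriv L.sigma (z + ω) = A * Complex.exp (η * z) * (deriv L.sigma z + η * L.sigma z) := by
  have h1 := (L.differentiable_sigma (z + ω)).hasDerivAt.comp_add_const z ω
  have h2 := (L.differentiable_sigma z).hasDerivAt
  have h3 : HasDerivAt (fun z => Complex.exp (η * z)) (Complex.exp (η * z) * η) z := by
    simpa using ((hasDerivAt_id z).const_mul η).cexp
  have h4 := (h3.const_mul A).mul h2
  have h5 : HasDerivAt (fun z => L.sigma (z + ω)) _ z :=
    h4.congr_of_eventuallyEq (Eventually.of_forall h)
  rw [h1.unique h5]
  ring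

end EllLattice

namespace EllLattice

open Filter Topology

variable (L : EllLattice)

lemma sigma_eq_zero {z : ℂ} (hz : L.mem z) : L.sigma z = 0 := by
  obtain ⟨A, η, _, h⟩ := L.sigma_quasi hz
  have := h 0
  rwa [zero_add, sigma_zero, mul_zero] at this

lemma deriv_sigma_ne_zero {z : ℂ} (hz : L.mem z) : deriv L.sigma z ≠ 0 := by
  obtain ⟨A, η, hA, h⟩ := L.sigma_quasi hz
  have := L.deriv_sigma_quasi h 0
  rw [zero_add, sigma_zero, deriv_sigma_zero] at this
  rw [this]
  simpa using hA

/-- Liouville for doubly periodic functions with removable singularities. -/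
lemma periodic_const {Q : ℂ → ℂ} (hper : ∀ ω, L.mem ω → ∀ z, Q (z + ω) = Q z)
    (hQ : ∀ p, ∃ g : ℂ → ℂ, AnalyticAt ℂ g p ∧ Q =ᶠ[𝓝[≠] p] g)
    {x y : ℂ} (hx : ContinuousAt Q x) (hy : ContinuousAt Q y) : Q x = Q y := by
  let Q' : ℂ → ℂ := fun p => limUnder (𝓝[≠] p) Q
  have hlim : ∀ p c, Tendsto Q (𝓝[≠] p) (𝓝 c) → Q' p = c := fun p c h => h.limUnder_eq
  have hd : Differentiable ℂ Q' := by
    intro p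
    obtain ⟨g, hg, he⟩ := hQ p
    have h1 : ∀ᶠ q in 𝓝[≠] p, Q' q = g q := by
      have e1 := eventually_eventually_nhdsWithin.mpr he
      have e2 := (hg.eventually_analyticAt).filter_mono (nhdsWithin_le_nhds (s := {p}ᶜ))
      filter_upwards [e1, e2, self_mem_nhdsWithin] with q hq1 hq2 hqp
      have hne : 𝓝[{p}ᶜ] q = 𝓝 q := isOpen_compl_singleton.nhdsWithin_eq hqp
      rw [hne] at hq1
      refine hlim q _ ?_
      have t := hq2.continuousAt.tendsto.mono_left (nhdsWithin_le_nhds (s := {q}ᶜ))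
      refine t.congr' ?_
      exact (hq1.filter_mono nhdsWithin_le_nhds).mono fun a ha => ha.symm
    have h2 : Q' p = g p := by
      refine hlim p _ ?_
      have t := hg.continuousAt.tendsto.mono_left (nhdsWithin_le_nhds (s := {p}ᶜ))
      exact t.congr' (he.mono fun a ha => ha.symm)
    have h3 : Q' =ᶠ[𝓝 p] g := by
      rw [eventually_nhdsWithin_iff] at h1
      filter_upwards [h1] with q hq
      by_cases hqp : q = p
      · rw [hqp, h2]
      · exact hq hqp
    exact hg.differentiableAt.congr_of_eventuallyEq h3
  have hper' : ∀ ω, L.mem ω → ∀ z, Q' (z + ω) = Q' z := by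
    intro ω hω z
    obtain ⟨g, hg, he⟩ := hQ z
    have t0 : Tendsto Q (𝓝[≠] z) (𝓝 (g z)) := by
      have t := hg.continuousAt.tendsto.mono_left (nhdsWithin_le_nhds (s := {z}ᶜ))
      exact t.congr' (he.mono fun a ha => ha.symm)
    rw [hlim z _ t0]
    refine hlim _ _ ?_
    have s : Tendsto (fun x => x - ω) (𝓝[≠] (z + ω)) (𝓝[≠] z) := by
      refine tendsto_nhdsWithin_iff.mpr ⟨?_, ?_⟩
      · have : Tendsto (fun x => x - ω) (𝓝 (z + ω)) (𝓝 (z + ω - ω)) :=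
          (continuous_id.sub continuous_const).tendsto _
        rw [add_sub_cancel_right] at this
        exact this.mono_left nhdsWithin_le_nhds
      · filter_upwards [self_mem_nhdsWithin] with x hx h
        exact hx (by simpa [sub_eq_iff_eq_add] using h)
    refine (t0.comp s).congr fun x => ?_
    rw [Function.comp, ← hper ω hω (x - ω), sub_add_cancel]
  have hb : Bornology.IsBounded (Set.range Q') := by
    have hB := ZSpan.fundamentalDomain_isBounded L.pp.basis
    have hK := hB.isCompact_closure
    refine (hK.image hd.continuous).isBounded.subset ?_
    rintro _ ⟨z, rfl⟩
    obtain ⟨v, hv, _⟩ := ZSpan.exist_unique_vadd_mem_fundamentalDomain L.pp.basis z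
    have hm : L.mem (v : ℂ) := by
      rw [mem_iff, PeriodPair.lattice_eq_span_range_basis]
      exact v.2
    refine ⟨_, subset_closure hv, ?_⟩
    have : v +ᵥ z = z + (v : ℂ) := by rw [add_comm]; rfl
    rw [this]
    exact hper' _ hm z
  have hc : ∀ z, ContinuousAt Q z → Q' z = Q z := fun z hz =>
    hlim z _ (hz.tendsto.mono_left nhdsWithin_le_nhds)
  rw [← hc x hx, ← hc y hy]
  exact hd.apply_eq_apply_of_bounded hb x y

lemma chi_eq {a b c : ℂ} (ha : ¬ L.mem a) (hb : ¬ L.mem b) (hc : ¬ L.mem c)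
    (hab : ¬ L.mem (a + b)) (habc : ¬ L.mem (a + b + c)) :
    L.zeta a + L.zeta b + L.zeta c - L.zeta (a + b + c) =
      L.sigma (a + b) * L.sigma (b + c) * L.sigma (c + a) /
        (L.sigma a * L.sigma b * L.sigma c * L.sigma (a + b + c)) := by
  have na := L.sigma_ne_zero ha
  have nb := L.sigma_ne_zero hb
  have nc := L.sigma_ne_zero hc
  have nabc := L.sigma_ne_zero habc
  let H : ℂ → ℂ := fun c => (L.zeta a + L.zeta b) * L.sigma c * L.sigma (c + (a + b))
    + deriv L.sigma c * L.sigma (c + (a + b)) - L.sigma c * deriv L.sigma (c + (a + b))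
    - L.sigma (a + b) * L.sigma (c + b) * L.sigma (c + a) / (L.sigma a * L.sigma b)
  let Q : ℂ → ℂ := fun c => H c / (L.sigma c * L.sigma (c + (a + b)))
  have hs := L.differentiable_sigma
  have hds := L.differentiable_sigma.deriv
  have hHd : Differentiable ℂ H := by
    have : ∀ k : ℂ, Differentiable ℂ (fun c => L.sigma (c + k)) := fun k =>
      hs.comp (differentiable_id.add_const k)
    have h2 : ∀ k : ℂ, Differentiable ℂ (fun c => deriv L.sigma (c + k)) := fun k =>
      hds.comp (differentiable_id.add_const k)
    exact (((((differentiable_const _).mul hs).mul (this _)).add (hds.mul (this _))).sub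
      (hs.mul (h2 _))).sub ((((differentiable_const _).mul (this _)).mul (this _)).div_const _)
  have hquasi : ∀ ω, L.mem ω → ∃ B : ℂ → ℂ, (∀ z, B z ≠ 0) ∧ (∀ z, H (z + ω) = B z * H z) ∧
      ∀ z, L.sigma (z + ω) * L.sigma (z + ω + (a + b))
        = B z * (L.sigma z * L.sigma (z + (a + b))) := by
    intro ω hω
    obtain ⟨A, η, hA, h⟩ := L.sigma_quasi hω
    have h' := L.deriv_sigma_quasi h
    refine ⟨fun z => A ^ 2 * (Complex.exp (η * z) * Complex.exp (η * z)
      * Complex.exp (η * a) * Complex.exp (η * b)), ?_, ?_, ?_⟩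
    · intro z
      simp [hA]
    · intro z
      simp only [H]
      rw [show z + ω + (a + b) = (z + (a + b)) + ω by ring, show z + ω + b = z + b + ω by ring,
        show z + ω + a = z + a + ω by ring]
      simp only [h, h', mul_add, Complex.exp_add]
      ring
    · intro z
      rw [show z + ω + (a + b) = (z + (a + b)) + ω by ring]
      simp only [h, mul_add, Complex.exp_add]
      ring
  have hper : ∀ ω, L.mem ω → ∀ z, Q (z + ω) = Q z := by
    intro ω hω z
    obtain ⟨B, hB, h1, h2⟩ := hquasi ω hω
    simp only [Q]
    rw [h1, h2, mul_div_mul_left _ _ (hB z)]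
  have hH0 : ∀ p, L.mem p → H p = 0 := by
    intro p hp
    obtain ⟨B, hB, h1, -⟩ := hquasi p hp
    have h0 : H 0 = 0 := by
      simp only [H, zero_add, sigma_zero, deriv_sigma_zero]
      field_simp
      ring
    have := h1 0
    rwa [zero_add, h0, mul_zero] at this
  have hH1 : ∀ p, L.mem (p + (a + b)) → H p = 0 := by
    intro p hp
    obtain ⟨B, hB, h1, -⟩ := hquasi _ hp
    have h0 : H (-(a + b)) = 0 := by
      simp only [H, neg_add_cancel, sigma_zero, deriv_sigma_zero]
      rw [show -(a + b) + b = - a by ring, show -(a + b) + a = - b by ring]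
      simp only [sigma_neg]
      field_simp
      ring
    have := h1 (-(a + b))
    rwa [h0, mul_zero, show -(a + b) + (p + (a + b)) = p by ring] at this
  have han : ∀ {f : ℂ → ℂ}, Differentiable ℂ f → ∀ z, AnalyticAt ℂ f z := fun hf z => hf.analyticAt z
  have hsab : Differentiable ℂ (fun c => L.sigma (c + (a + b))) :=
    hs.comp (differentiable_id.add_const _)
  have hdsl : ∀ {f : ℂ → ℂ} (p : ℂ), Differentiable ℂ f → Differentiable ℂ (dslope f p) := by
    intro f p hf
    rw [← differentiableOn_univ] at hf ⊢
    exact (Complex.differentiableOn_dslope univ_mem).mpr hf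
  have hdsv : ∀ (f : ℂ → ℂ) (p x : ℂ), f p = 0 → x ≠ p → f x = (x - p) * dslope f p x := by
    intro f p x hp hx
    rw [dslope_of_ne _ hx, slope_def_field, hp, sub_zero]
    have := sub_ne_zero.mpr hx
    field_simp
  have hQan : ∀ p, ¬ L.mem p → ¬ L.mem (p + (a + b)) → AnalyticAt ℂ Q p := by
    intro p h1 h2
    exact (han hHd p).div ((han hs p).mul (han hsab p))
      (mul_ne_zero (L.sigma_ne_zero h1) (L.sigma_ne_zero h2))
  have hQ : ∀ p, ∃ g : ℂ → ℂ, AnalyticAt ℂ g p ∧ Q =ᶠ[𝓝[≠] p] g := by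
    intro p
    by_cases h1 : L.mem p
    · have h2 : ¬ L.mem (p + (a + b)) := by rwa [add_comm, L.mem_add_right h1]
      refine ⟨fun c => dslope H p c / (dslope L.sigma p c * L.sigma (c + (a + b))), ?_, ?_⟩
      · refine (han (hdsl p hHd) p).div ((han (hdsl p hs) p).mul (han hsab p)) ?_
        simp only [dslope_same]
        exact mul_ne_zero (L.deriv_sigma_ne_zero h1) (L.sigma_ne_zero h2)
      · filter_upwards [self_mem_nhdsWithin] with x hx
        simp only [Q]
        rw [hdsv H p x (hH0 p h1) hx, hdsv L.sigma p x (L.sigma_eq_zero h1) hx, mul_assoc,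
          mul_div_mul_left _ _ (sub_ne_zero.mpr hx)]
    · by_cases h2 : L.mem (p + (a + b))
      · refine ⟨fun c => dslope H p c /
          (L.sigma c * dslope (fun c => L.sigma (c + (a + b))) p c), ?_, ?_⟩
        · refine (han (hdsl p hHd) p).div ((han hs p).mul (han (hdsl p hsab) p)) ?_
          simp only [dslope_same]
          rw [deriv_comp_add_const]
          exact mul_ne_zero (L.sigma_ne_zero h1) (L.deriv_sigma_ne_zero h2)
        · filter_upwards [self_mem_nhdsWithin] with x hx
          simp only [Q]
          rw [hdsv H p x (hH1 p h2) hx,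
            hdsv (fun c => L.sigma (c + (a + b))) p x (L.sigma_eq_zero h2) hx, mul_left_comm,
            mul_div_mul_left _ _ (sub_ne_zero.mpr hx)]
      · exact ⟨Q, hQan p h1 h2, EventuallyEq.rfl⟩
  have e1 : c + (a + b) = a + b + c := by ring
  have hQ0 : Q c = Q (-a) := by
    refine L.periodic_const hper hQ (hQan c hc (by rwa [e1])).continuousAt
      (hQan (-a) (by rwa [mem_neg]) ?_).continuousAt
    rwa [show -a + (a + b) = b by ring]
  have hQa : Q (-a) = 0 := by
    simp only [Q, H]
    rw [show -a + (a + b) = b by ring, neg_add_cancel, sigma_zero, sigma_neg, deriv_sigma_neg]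
    have : (L.zeta a + L.zeta b) * -L.sigma a * L.sigma b + deriv L.sigma a * L.sigma b
        - -L.sigma a * deriv L.sigma b = 0 := by
      simp only [zeta]
      field_simp
      ring
    rw [this]
    simp
  rw [hQa] at hQ0
  simp only [Q, div_eq_zero_iff] at hQ0
  rw [e1] at hQ0
  have hHc : H c = 0 := by
    rcases hQ0 with h | h
    · exact h
    · exact absurd h (mul_ne_zero nc nabc)
  simp only [H] at hHc
  rw [e1] at hHc
  have ec : L.zeta c = deriv L.sigma c / L.sigma c := rfl
  have eabc : L.zeta (a + b + c) = deriv L.sigma (a + b + c) / L.sigma (a + b + c) := rfl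
  rw [ec, eabc, eq_div_iff (by simp [na, nb, nc, nabc]), add_comm b c]
  field_simp
  field_simp at hHc
  linear_combination hHc

end EllLattice

namespace EllLattice

variable (L : EllLattice)

lemma Phi_shift {x d k : ℂ} (hg : ∀ c0 cd ck : ℤ, ¬(c0 = 0 ∧ cd = 0 ∧ ck = 0) →
      ¬ L.mem (c0 * x + cd * d + ck * k)) :
    L.Phi (x + d) k * L.Phi d (-k) =
      L.Phi x k * (L.zeta d - L.zeta (x + d) + (L.zeta (x + k) - L.zeta k)) := by
  have m1 : ¬ L.mem d := by convert hg 0 1 0 (by simp) using 2; push_cast; ring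
  have m2 : ¬ L.mem k := by convert hg 0 0 1 (by simp) using 2; push_cast; ring
  have m3 : ¬ L.mem (x + k) := by convert hg 1 0 1 (by simp) using 2; push_cast; ring
  have m4 : ¬ L.mem (d + -k) := by convert hg 0 1 (-1) (by simp) using 2; push_cast; ring
  have m5 : ¬ L.mem (x + d) := by convert hg 1 1 0 (by simp) using 2; push_cast; ring
  have m6 : ¬ L.mem x := by convert hg 1 0 0 (by simp) using 2; push_cast; ring
  have e := L.chi_eq (a := d) (b := -k) (c := x + k) m1 (by rwa [mem_neg]) m3 m4
    (by convert m5 using 2; ring)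
  rw [show d + -k + (x + k) = x + d by ring, show -k + (x + k) = x by ring,
    show x + k + d = x + d + k by ring, zeta_neg, sigma_neg] at e
  have e2 : L.zeta d - L.zeta (x + d) + (L.zeta (x + k) - L.zeta k)
    = L.zeta d + -L.zeta k + L.zeta (x + k) - L.zeta (x + d) := by ring
  rw [e2, e]
  have n1 := L.sigma_ne_zero m1
  have n2 := L.sigma_ne_zero m2
  have n3 := L.sigma_ne_zero m3
  have n5 := L.sigma_ne_zero m5
  have n6 := L.sigma_ne_zero m6
  simp only [Phi, sigma_neg]
  field_simp

lemma Phi_fay {x d k k' : ℂ} (hg : ∀ c0 cd ck ck' : ℤ, ¬(c0 = 0 ∧ cd = 0 ∧ ck = 0 ∧ ck' = 0) →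
      ¬ L.mem (c0 * x + cd * d + ck * k + ck' * k')) :
    L.Phi (x + d) (k + k') * L.Phi d (-k) =
      L.Phi x (k + k') * L.Phi d k' - L.Phi x k * L.Phi (x + d) k' := by
  have md : ¬ L.mem d := by convert hg 0 1 0 0 (by simp) using 2; push_cast; ring
  have mk : ¬ L.mem k := by convert hg 0 0 1 0 (by simp) using 2; push_cast; ring
  have mk' : ¬ L.mem k' := by convert hg 0 0 0 1 (by simp) using 2; push_cast; ring
  have mx : ¬ L.mem x := by convert hg 1 0 0 0 (by simp) using 2; push_cast; ring
  have mdk' : ¬ L.mem (d + k') := by convert hg 0 1 0 1 (by simp) using 2; push_cast; ring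
  have mkk' : ¬ L.mem (k + k') := by convert hg 0 0 1 1 (by simp) using 2; push_cast; ring
  have mdk : ¬ L.mem (d + -k) := by convert hg 0 1 (-1) 0 (by simp) using 2; push_cast; ring
  have mxd : ¬ L.mem (x + d) := by convert hg 1 1 0 0 (by simp) using 2; push_cast; ring
  have mxk' : ¬ L.mem (x + k') := by convert hg 1 0 0 1 (by simp) using 2; push_cast; ring
  have m1 : ¬ L.mem (x + d + k') := by convert hg 1 1 0 1 (by simp) using 2; push_cast; ring
  have m2 : ¬ L.mem (x + (k + k')) := by convert hg 1 0 1 1 (by simp) using 2; push_cast; ring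
  have t1 := L.chi_eq (a := d) (b := k') (c := x) md mk' mx mdk' (by convert m1 using 2; ring)
  have t2 := L.chi_eq (a := k) (b := k') (c := x) mk mk' mx mkk' (by convert m2 using 2; ring)
  have t3 := L.chi_eq (a := d) (b := -k) (c := x + (k + k')) md (by rwa [mem_neg]) m2 mdk
    (by convert m1 using 2; ring)
  rw [show d + k' + x = x + d + k' by ring, add_comm k' x] at t1
  rw [show k + k' + x = x + (k + k') by ring, add_comm k' x] at t2
  rw [show d + -k + (x + (k + k')) = x + d + k' by ring, show -k + (x + (k + k')) = x + k' by ring,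
    show x + (k + k') + d = x + d + (k + k') by ring, zeta_neg, sigma_neg] at t3
  have nd := L.sigma_ne_zero md
  have nk := L.sigma_ne_zero mk
  have nk' := L.sigma_ne_zero mk'
  have nx := L.sigma_ne_zero mx
  have nkk' := L.sigma_ne_zero mkk'
  have nxd := L.sigma_ne_zero mxd
  have nxk' := L.sigma_ne_zero mxk'
  have n1 := L.sigma_ne_zero m1
  have n2 := L.sigma_ne_zero m2
  have t := congrArg (· * (L.sigma (x + (k + k')) * L.sigma (x + d + k') /
    (L.sigma (x + k') * L.sigma (x + d) * L.sigma (k + k')))) (show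
      (L.zeta d + -L.zeta k + L.zeta (x + (k + k')) - L.zeta (x + d + k')) =
      (L.zeta d + L.zeta k' + L.zeta x - L.zeta (x + d + k')) -
      (L.zeta k + L.zeta k' + L.zeta x - L.zeta (x + (k + k'))) by ring)
  rw [t1, t2, t3, sub_mul] at t
  simp only [Phi, sigma_neg]
  convert t using 1
  · field_simp
  · congr 1 <;> field_simp

lemma chi_shift {x d k β : ℂ} (hg : ∀ c0 cd ck e : ℤ, ¬(c0 = 0 ∧ cd = 0 ∧ ck = 0 ∧ e = 0) →
      ¬ L.mem (c0 * x + cd * d + ck * k + e * β)) :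
    L.chi β (-d) (x + d) * (L.Phi (x + d) k / L.Phi d k * (L.chi β k (x + d))⁻¹) =
      L.Phi (x + d) k / L.Phi d k - L.Phi x k * (L.chi β k x)⁻¹ := by
  have md : ¬ L.mem d := by convert hg 0 1 0 0 (by simp) using 2; push_cast; ring
  have mk : ¬ L.mem k := by convert hg 0 0 1 0 (by simp) using 2; push_cast; ring
  have mb : ¬ L.mem β := by convert hg 0 0 0 1 (by simp) using 2; push_cast; ring
  have mx : ¬ L.mem x := by convert hg 1 0 0 0 (by simp) using 2; push_cast; ring
  have mdk : ¬ L.mem (d + k) := by convert hg 0 1 1 0 (by simp) using 2; push_cast; ring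
  have mbk : ¬ L.mem (β + k) := by convert hg 0 0 1 1 (by simp) using 2; push_cast; ring
  have mbd : ¬ L.mem (β + -d) := by convert hg 0 (-1) 0 1 (by simp) using 2; push_cast; ring
  have mxd : ¬ L.mem (x + d) := by convert hg 1 1 0 0 (by simp) using 2; push_cast; ring
  have mxk : ¬ L.mem (x + k) := by convert hg 1 0 1 0 (by simp) using 2; push_cast; ring
  have mxb : ¬ L.mem (x + β) := by convert hg 1 0 0 1 (by simp) using 2; push_cast; ring
  have mxdk : ¬ L.mem (x + d + k) := by convert hg 1 1 1 0 (by simp) using 2; push_cast; ring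
  have mxdb : ¬ L.mem (x + d + β) := by convert hg 1 1 0 1 (by simp) using 2; push_cast; ring
  have mxkb : ¬ L.mem (x + β + k) := by convert hg 1 0 1 1 (by simp) using 2; push_cast; ring
  have mxdkb : ¬ L.mem (x + d + β + k) := by
    convert hg 1 1 1 1 (by simp) using 2; push_cast; ring
  have t1 := L.chi_eq (a := β) (b := -d) (c := x + d) mb (by rwa [mem_neg]) mxd mbd
    (by convert mxb using 2; ring)
  have t2 := L.chi_eq (a := β) (b := k) (c := x + d) mb mk mxd mbk (by convert mxdkb using 2; ring)
  have t3 := L.chi_eq (a := β) (b := k) (c := x) mb mk mx mbk (by convert mxkb using 2; ring)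
  have t4 := L.chi_eq (a := d) (b := k) (c := x) md mk mx mdk (by convert mxdk using 2; ring)
  have t5 := L.chi_eq (a := β) (b := -d) (c := x + d + k) mb (by rwa [mem_neg]) mxdk mbd
    (by convert mxkb using 2; ring)
  rw [show β + -d + (x + d) = x + β by ring, show -d + (x + d) = x by ring, zeta_neg,
    sigma_neg] at t1
  rw [show β + k + (x + d) = x + d + β + k by ring, show k + (x + d) = x + d + k by ring] at t2
  rw [show β + k + x = x + β + k by ring, add_comm k x] at t3
  rw [show d + k + x = x + d + k by ring, add_comm k x] at t4
  rw [show β + -d + (x + d + k) = x + β + k by ring, show -d + (x + d + k) = x + k by ring,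
    show x + d + k + β = x + d + β + k by ring, zeta_neg, sigma_neg] at t5
  have nd := L.sigma_ne_zero md
  have nk := L.sigma_ne_zero mk
  have nb := L.sigma_ne_zero mb
  have nx := L.sigma_ne_zero mx
  have ndk := L.sigma_ne_zero mdk
  have nbk := L.sigma_ne_zero mbk
  have nxd := L.sigma_ne_zero mxd
  have nxk := L.sigma_ne_zero mxk
  have nxb := L.sigma_ne_zero mxb
  have nxdk := L.sigma_ne_zero mxdk
  have nxdb := L.sigma_ne_zero mxdb
  have nxkb := L.sigma_ne_zero mxkb
  have nxdkb := L.sigma_ne_zero mxdkb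
  have c1 : L.chi β (-d) (x + d) = L.sigma (β + -d) * L.sigma x * L.sigma (x + d + β) /
      (L.sigma β * -L.sigma d * L.sigma (x + d) * L.sigma (x + β)) := by
    rw [← t1, chi, zeta_neg, show x + d + β + -d = x + β by ring]
  have c2 : L.chi β k (x + d) = _ := t2
  have c3 : L.chi β k x = _ := t3
  have c3' : L.chi β k x ≠ 0 := by
    rw [c3]
    have : L.sigma (x + β) ≠ 0 := nxb
    positivity
  have key : L.zeta β + -L.zeta d + L.zeta (x + d + k) - L.zeta (x + β + k) =
      L.chi β k x - (L.zeta d + L.zeta k + L.zeta x - L.zeta (x + d + k)) := by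
    rw [chi]; ring
  rw [t5, t4] at key
  have k2 : L.Phi x k * (L.chi β k x)⁻¹ = L.Phi (x + d) k / L.Phi d k *
      ((L.sigma (d + k) * L.sigma (x + k) * L.sigma (x + d) /
      (L.sigma d * L.sigma k * L.sigma x * L.sigma (x + d + k))) * (L.chi β k x)⁻¹) := by
    rw [← mul_assoc]
    congr 1
    simp only [Phi]
    field_simp
  have k3 : L.Phi (x + d) k / L.Phi d k - L.Phi x k * (L.chi β k x)⁻¹ =
      L.Phi (x + d) k / L.Phi d k * ((L.chi β k x - (L.sigma (d + k) * L.sigma (x + k) *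
      L.sigma (x + d) / (L.sigma d * L.sigma k * L.sigma x * L.sigma (x + d + k))))
        * (L.chi β k x)⁻¹) := by
    rw [k2, sub_mul, mul_inv_cancel₀ c3']
    ring
  rw [k3, ← key, mul_left_comm, c1, c2, c3]
  congr 1
  field_simp

lemma Phi_ne_zero {x k : ℂ} (hx : ¬ L.mem x) (hk : ¬ L.mem k) (hxk : ¬ L.mem (x + k)) :
    L.Phi x k ≠ 0 :=
  div_ne_zero (L.sigma_ne_zero hxk) (mul_ne_zero (L.sigma_ne_zero hx) (L.sigma_ne_zero hk))

end EllLattice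

namespace KPData

variable {N N' : ℕ}

/-- reduced plane wave factor -/
def ρc (D : KPData N N') (i : Fin N) (n m h : ℤ) : ℂ :=
  D.L.Phi D.del (-(D.κ i)) ^ n * D.L.Phi D.eps (-(D.κ i)) ^ m *
    D.L.Phi D.lam (-(D.κ i)) ^ h * D.ρ0 i

/-- reduced plane wave factor -/
def νc (D : KPData N N') (j : Fin N') (n m h : ℤ) : ℂ :=
  D.L.Phi D.del (D.κ' j) ^ (-n) * D.L.Phi D.eps (D.κ' j) ^ (-m) *
    D.L.Phi D.lam (D.κ' j) ^ (-h) * D.ν0 j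

lemma exp_Psi_neg (L : EllLattice) (d k : ℂ) :
    Complex.exp (-(L.zeta d) * k) * L.Psi d (-k) = L.Phi d (-k) := by
  rw [EllLattice.Psi, mul_left_comm, ← Complex.exp_add]
  simp

lemma exp_Psi (L : EllLattice) (d k : ℂ) :
    Complex.exp (L.zeta d * k) * L.Psi d k = L.Phi d k := by
  rw [EllLattice.Psi, mul_left_comm, ← Complex.exp_add]
  simp

lemma ρ_eq (D : KPData N N') (i : Fin N) (n m h : ℤ) :
    D.ρ i n m h = D.ρc i n m h * Complex.exp (D.L.zeta (D.xi n m h) * D.κ i) := by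
  simp only [ρ, ρc, exp_Psi_neg]
  ring

lemma ν_eq (D : KPData N N') (j : Fin N') (n m h : ℤ) :
    D.ν j n m h = D.νc j n m h * Complex.exp (D.L.zeta (D.xi n m h) * D.κ' j) := by
  simp only [ν, νc, exp_Psi]
  ring

lemma r_eq (D : KPData N N') (n m h : ℤ) (i : Fin N) :
    D.r n m h i = D.ρc i n m h * D.L.Phi (D.xi n m h) (D.κ i) := by
  rw [r, ρ_eq, mul_assoc, exp_Psi]

lemma s_eq (D : KPData N N') (n m h : ℤ) (j : Fin N') :
    D.s n m h j = D.νc j n m h * D.L.Phi (D.xi n m h) (D.κ' j) := by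
  rw [s, ν_eq, mul_assoc, exp_Psi]

lemma M_eq (D : KPData N N') (n m h : ℤ) (i : Fin N) (j : Fin N') :
    D.M n m h i j = D.ρc i n m h * D.νc j n m h * D.L.Phi (D.xi n m h) (D.κ i + D.κ' j) := by
  rw [M, Matrix.of_apply, ρ_eq, ν_eq, ← exp_Psi D.L _ (D.κ i + D.κ' j), mul_add, Complex.exp_add]
  ring

lemma inv_diagonal_mulVec {n : ℕ} (v x : Fin n → ℂ) (hv : ∀ j, v j ≠ 0) :
    (Matrix.diagonal v)⁻¹ *ᵥ x = fun j => (v j)⁻¹ * x j := by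
  have : (Matrix.diagonal v)⁻¹ = Matrix.diagonal (fun j => (v j)⁻¹) := by
    apply Matrix.inv_eq_right_inv
    rw [Matrix.diagonal_mul_diagonal, ← Matrix.diagonal_one]
    congr 1
    funext j
    exact mul_inv_cancel₀ (hv j)
  rw [this]
  funext j
  rw [Matrix.mulVec_diagonal]

/-- One lattice shift by `d`. -/
lemma shift_core (D : KPData N N') (β : ℂ)
    (hInv : ∀ n m h : ℤ, IsUnit ((1 + D.M n m h * D.C).det))
    (hχβ : ∀ (n m h : ℤ) (j : Fin N'), D.L.chi β (D.κ' j) (D.xi n m h) ≠ 0)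
    (n m h n' m' h' : ℤ) (d : ℂ)
    (hg : ∀ (c0 cd e : ℤ) (a : Fin N → ℤ) (b : Fin N' → ℤ),
      ¬ (c0 = 0 ∧ cd = 0 ∧ e = 0 ∧ a = 0 ∧ b = 0) →
      ¬ D.L.mem (c0 * D.xi n m h + cd * d + (∑ i, a i • D.κ i) + (∑ j, b j • D.κ' j) + e * β))
    (hξ : D.xi n' m' h' = D.xi n m h + d)
    (hρ : ∀ i, D.ρc i n' m' h' = D.L.Phi d (-(D.κ i)) * D.ρc i n m h)
    (hν : ∀ j, D.νc j n' m' h' = D.νc j n m h / D.L.Phi d (D.κ' j)) :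
    (1 + D.M n m h * D.C) *ᵥ D.u0 n' m' h' =
      (fun i => (D.L.zeta d - D.L.zeta (D.xi n' m' h') + D.w0 n' m' h' +
        (D.L.zeta (D.xi n m h + D.κ i) - D.L.zeta (D.κ i))) * D.r n m h i) ∧
    D.L.chi β (-d) (D.xi n' m' h') * D.W β n' m' h' =
      D.L.chi β (-d) (D.xi n' m' h') - D.w0 n' m' h' +
        D.s n m h ⬝ᵥ ((D.DK' β n m h)⁻¹ *ᵥ (D.C *ᵥ D.u0 n' m' h')) := by
  have hgi : ∀ i (c0 cd ck : ℤ), ¬(c0 = 0 ∧ cd = 0 ∧ ck = 0) →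
      ¬ D.L.mem (c0 * D.xi n m h + cd * d + ck * D.κ i) := by
    intro i c0 cd ck hne
    have := hg c0 cd 0 (Pi.single i ck) 0 (by simpa [and_assoc] using hne)
    convert this using 2
    simp [Pi.single_apply]
  have hgj : ∀ j (c0 cd ck e : ℤ), ¬(c0 = 0 ∧ cd = 0 ∧ ck = 0 ∧ e = 0) →
      ¬ D.L.mem (c0 * D.xi n m h + cd * d + ck * D.κ' j + e * β) := by
    intro j c0 cd ck e hne
    have := hg c0 cd e 0 (Pi.single j ck) (by
      simp only [Pi.single_eq_zero_iff]; tauto)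
    convert this using 2
    simp [Pi.single_apply]
  have hgij : ∀ i j (c0 cd ck ck' : ℤ), ¬(c0 = 0 ∧ cd = 0 ∧ ck = 0 ∧ ck' = 0) →
      ¬ D.L.mem (c0 * D.xi n m h + cd * d + ck * D.κ i + ck' * D.κ' j) := by
    intro i j c0 cd ck ck' hne
    have := hg c0 cd 0 (Pi.single i ck) (Pi.single j ck') (by
      simp only [Pi.single_eq_zero_iff]; tauto)
    convert this using 2
    simp [Pi.single_apply]
  have hPhi : ∀ j, D.L.Phi d (D.κ' j) ≠ 0 := by
    intro j
    apply D.L.Phi_ne_zero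
    · convert hgj j 0 1 0 0 (by simp) using 2; push_cast; ring
    · convert hgj j 0 0 1 0 (by simp) using 2; push_cast; ring
    · convert hgj j 0 1 1 0 (by simp) using 2; push_cast; ring
  have hM : D.M n' m' h' = D.M n m h - Matrix.vecMulVec (D.r n m h) (D.s n' m' h') := by
    ext i j
    rw [Matrix.sub_apply, Matrix.vecMulVec_apply, M_eq, M_eq, r_eq, s_eq, hξ, hρ, hν]
    have := D.L.Phi_fay (hgij i j)
    have hp := hPhi j
    field_simp
    linear_combination D.ρc i n m h * D.νc j n m h * this
  have hr : ∀ i, D.r n' m' h' i = (D.L.zeta d - D.L.zeta (D.xi n' m' h') +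
        (D.L.zeta (D.xi n m h + D.κ i) - D.L.zeta (D.κ i))) * D.r n m h i := by
    intro i
    rw [r_eq, r_eq, hξ, hρ]
    linear_combination D.ρc i n m h * D.L.Phi_shift (hgi i)
  have hs : ∀ j, D.L.chi β (-d) (D.xi n' m' h') *
      (D.s n' m' h' j * (D.L.chi β (D.κ' j) (D.xi n' m' h'))⁻¹) =
      D.s n' m' h' j - D.s n m h j * (D.L.chi β (D.κ' j) (D.xi n m h))⁻¹ := by
    intro j
    rw [s_eq, s_eq, hξ, hν]
    have := D.L.chi_shift (hgj j)
    linear_combination D.νc j n m h * this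
  have hu : (1 + D.M n' m' h' * D.C) *ᵥ D.u0 n' m' h' = D.r n' m' h' := by
    rw [u0, Matrix.mulVec_mulVec, Matrix.mul_nonsing_inv _ (hInv _ _ _), Matrix.one_mulVec]
  have hw0 : D.w0 n' m' h' = D.s n' m' h' ⬝ᵥ (D.C *ᵥ D.u0 n' m' h') := rfl
  constructor
  · have e : (1 + D.M n m h * D.C) = (1 + D.M n' m' h' * D.C) +
        Matrix.vecMulVec (D.r n m h) (D.s n' m' h') * D.C := by
      rw [hM, Matrix.sub_mul]; abel
    rw [e, Matrix.add_mulVec, hu, ← Matrix.mulVec_mulVec]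
    funext i
    rw [Pi.add_apply, hr, Matrix.vecMulVec_mulVec, ← hw0]
    simp
    ring
  · have hW : D.W β n' m' h' = 1 - D.s n' m' h' ⬝ᵥ ((D.DK' β n' m' h')⁻¹ *ᵥ
      (D.C *ᵥ D.u0 n' m' h')) := rfl
    rw [hW, mul_sub, mul_one, hw0, sub_add]
    congr 1
    rw [DK', DK', inv_diagonal_mulVec _ _ (hχβ n' m' h'), inv_diagonal_mulVec _ _ (hχβ n m h)]
    simp only [dotProduct]
    rw [Finset.mul_sum, ← Finset.sum_sub_distrib]
    refine Finset.sum_congr rfl fun j _ => ?_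
    linear_combination ((D.C *ᵥ D.u0 n' m' h') j) * hs j

lemma Generic.point {D : KPData N N'} {β : ℂ} (hgen : D.Generic ![β]) (n m h : ℤ)
    (c0 cd ce e : ℤ) (a : Fin N → ℤ) (b : Fin N' → ℤ)
    (hne : ¬ (c0 = 0 ∧ cd = 0 ∧ ce = 0 ∧ e = 0 ∧ a = 0 ∧ b = 0)) :
    ¬ D.L.mem (c0 * D.xi n m h + cd * D.del + ce * D.eps +
      (∑ i, a i • D.κ i) + (∑ j, b j • D.κ' j) + e * β) := by
  have := hgen c0 (c0 * n + cd) (c0 * m + ce) (c0 * h) a b (fun _ => e) (by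
    rintro ⟨rfl, h1, h2, h3, h4, h5, h6⟩
    have h7 := congrFun h6 0
    simp at h1 h2 h7
    exact hne ⟨rfl, h1, h2, h7, h4, h5⟩)
  convert this using 2
  simp [xi]
  ring

end KPData
/-- Nonlinear shift relation `W_β (w̃ − ŵ) = χ_{β,−δ}(ξ+δ) W̃_β − χ_{β,−ε}(ξ+ε) Ŵ_β`. -/
theorem W_w_nonlinear_relation {N N' : ℕ} (D : KPData N N') (β : ℂ)
    (hρ0 : ∀ i, D.ρ0 i ≠ 0) (hν0 : ∀ j, D.ν0 j ≠ 0)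
    (hgen : D.Generic ![β])
    (hInv : ∀ n m h : ℤ, IsUnit ((1 + D.M n m h * D.C).det))
    (hχβ : ∀ (n m h : ℤ) (j : Fin N'), D.L.chi β (D.κ' j) (D.xi n m h) ≠ 0) :
    ∀ n m h : ℤ,
      D.W β n m h * (D.w (n + 1) m h - D.w n (m + 1) h) =
        D.L.chi β (-D.del) (D.xi (n + 1) m h) * D.W β (n + 1) m h -
          D.L.chi β (-D.eps) (D.xi n (m + 1) h) * D.W β n (m + 1) h := by
  intro n m h
  have hgd : ∀ (c0 cd e : ℤ) (a : Fin N → ℤ) (b : Fin N' → ℤ),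
      ¬ (c0 = 0 ∧ cd = 0 ∧ e = 0 ∧ a = 0 ∧ b = 0) →
      ¬ D.L.mem (c0 * D.xi n m h + cd * D.del + (∑ i, a i • D.κ i) +
        (∑ j, b j • D.κ' j) + e * β) := by
    intro c0 cd e a b hne
    have := hgen.point n m h c0 cd 0 e a b (by tauto)
    convert this using 2
    push_cast
    ring
  have hge : ∀ (c0 cd e : ℤ) (a : Fin N → ℤ) (b : Fin N' → ℤ),
      ¬ (c0 = 0 ∧ cd = 0 ∧ e = 0 ∧ a = 0 ∧ b = 0) →
      ¬ D.L.mem (c0 * D.xi n m h + cd * D.eps + (∑ i, a i • D.κ i) +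
        (∑ j, b j • D.κ' j) + e * β) := by
    intro c0 cd e a b hne
    have := hgen.point n m h c0 0 cd e a b (by tauto)
    convert this using 2
    push_cast
    ring
  have hnz : ∀ d, (∀ (c0 cd e : ℤ) (a : Fin N → ℤ) (b : Fin N' → ℤ),
      ¬ (c0 = 0 ∧ cd = 0 ∧ e = 0 ∧ a = 0 ∧ b = 0) →
      ¬ D.L.mem (c0 * D.xi n m h + cd * d + (∑ i, a i • D.κ i) +
        (∑ j, b j • D.κ' j) + e * β)) →
      (∀ i, D.L.Phi d (-(D.κ i)) ≠ 0) ∧ (∀ j, D.L.Phi d (D.κ' j) ≠ 0) := by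
    intro d hg
    constructor
    · intro i
      apply D.L.Phi_ne_zero
      · convert hg 0 1 0 0 0 (by simp) using 2; simp
      · convert hg 0 0 0 (Pi.single i (-1)) 0 (by simp) using 2; simp [Pi.single_apply]
      · convert hg 0 1 0 (Pi.single i (-1)) 0 (by simp) using 2; simp [Pi.single_apply]
    · intro j
      apply D.L.Phi_ne_zero
      · convert hg 0 1 0 0 0 (by simp) using 2; simp
      · convert hg 0 0 0 0 (Pi.single j 1) (by simp) using 2; simp [Pi.single_apply]
      · convert hg 0 1 0 0 (Pi.single j 1) (by simp) using 2; simp [Pi.single_apply]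
  have hxd : D.xi (n + 1) m h = D.xi n m h + D.del := by
    simp only [KPData.xi, zsmul_eq_mul]; push_cast; ring
  have hxe : D.xi n (m + 1) h = D.xi n m h + D.eps := by
    simp only [KPData.xi, zsmul_eq_mul]; push_cast; ring
  obtain ⟨A1, A2⟩ := D.shift_core β hInv hχβ n m h (n + 1) m h D.del hgd hxd
    (fun i => by
      rw [KPData.ρc, KPData.ρc, zpow_add_one₀ ((hnz _ hgd).1 i)]; ring)
    (fun j => by
      rw [KPData.νc, KPData.νc, neg_add, zpow_add₀ ((hnz _ hgd).2 j), _root_.zpow_neg_one]; ring)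
  obtain ⟨B1, B2⟩ := D.shift_core β hInv hχβ n m h n (m + 1) h D.eps hge hxe
    (fun i => by
      rw [KPData.ρc, KPData.ρc, zpow_add_one₀ ((hnz _ hge).1 i)]; ring)
    (fun j => by
      rw [KPData.νc, KPData.νc, neg_add, zpow_add₀ ((hnz _ hge).2 j), _root_.zpow_neg_one]; ring)
  have hwd : D.w (n + 1) m h - D.w n (m + 1) h =
      (D.L.zeta (D.xi (n + 1) m h) - D.w0 (n + 1) m h - D.L.zeta D.del) -
      (D.L.zeta (D.xi n (m + 1) h) - D.w0 n (m + 1) h - D.L.zeta D.eps) := by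
    simp only [KPData.w, zsmul_eq_mul]; push_cast; ring
  have hu : D.u0 n (m + 1) h - D.u0 (n + 1) m h =
      (D.w (n + 1) m h - D.w n (m + 1) h) • D.u0 n m h := by
    have e1 : (1 + D.M n m h * D.C) *ᵥ (D.u0 n (m + 1) h - D.u0 (n + 1) m h) =
        (D.w (n + 1) m h - D.w n (m + 1) h) • D.r n m h := by
      rw [Matrix.mulVec_sub, A1, B1, hwd]
      funext i
      simp only [Pi.sub_apply, Pi.smul_apply, smul_eq_mul]
      ring
    have e2 := congrArg (fun v => (1 + D.M n m h * D.C)⁻¹ *ᵥ v) e1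
    rwa [Matrix.mulVec_mulVec, Matrix.nonsing_inv_mul _ (hInv _ _ _), Matrix.one_mulVec,
      Matrix.mulVec_smul] at e2
  have hW : D.W β n m h = 1 - D.s n m h ⬝ᵥ ((D.DK' β n m h)⁻¹ *ᵥ
      (D.C *ᵥ D.u0 n m h)) := rfl
  have hfin : D.s n m h ⬝ᵥ ((D.DK' β n m h)⁻¹ *ᵥ (D.C *ᵥ D.u0 n (m + 1) h)) -
      D.s n m h ⬝ᵥ ((D.DK' β n m h)⁻¹ *ᵥ (D.C *ᵥ D.u0 (n + 1) m h)) =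
      (D.w (n + 1) m h - D.w n (m + 1) h) *
        D.s n m h ⬝ᵥ ((D.DK' β n m h)⁻¹ *ᵥ (D.C *ᵥ D.u0 n m h)) := by
    rw [← dotProduct_sub, ← Matrix.mulVec_sub, ← Matrix.mulVec_sub, hu, Matrix.mulVec_smul,
      Matrix.mulVec_smul, dotProduct_smul, smul_eq_mul]
  have hc1 : D.L.chi β (-D.del) (D.xi (n + 1) m h) =
      D.L.zeta β - D.L.zeta D.del + D.L.zeta (D.xi (n + 1) m h) - D.L.zeta (D.xi n m h + β) := by
    rw [EllLattice.chi, EllLattice.zeta_neg, hxd,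
      show D.xi n m h + D.del + β + -D.del = D.xi n m h + β by ring]
    ring
  have hc2 : D.L.chi β (-D.eps) (D.xi n (m + 1) h) =
      D.L.zeta β - D.L.zeta D.eps + D.L.zeta (D.xi n (m + 1) h) - D.L.zeta (D.xi n m h + β) := by
    rw [EllLattice.chi, EllLattice.zeta_neg, hxe,
      show D.xi n m h + D.eps + β + -D.eps = D.xi n m h + β by ring]
    ring
  rw [A2, B2, hc1, hc2, hW]
  linear_combination hfin + hwd
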